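/- Assume ℓ(C) = 3 with f_1 = x, f_2 = y and f_3 = z (so e_1 = e_2 = e_3 = 1 and e_j ≥ 2 for j ≥ 4). Let φ : S^{m−1} → S³ be the S-linear map φ(A_1,...,A_{m−1}) = Σ_{j=1}^{m−1} A_j ρ_j. Then the kernel of φ is a free S-module with basis R_4,...,R_m, where for 4 ≤ j ≤ m−1 the vector R_j ∈ S^{m−1} has −x·f_{j,x} in position 1, −y·f_{j,y} in position 2, −z·f_{j,z} in position 3, f_j in position j, and zero in the other positions, and R_m has −f_m − x·f_{m,x} in position 1, −f_m − y·f_{m,y} in position 2, −f_m − z·f_{m,z} in position 3, and −f_m in positions 4 through m−1. That is, ker φ equals the S-submodule generated by R_4,...,R_m, and R_4,...,R_m are linearly independent over S. -/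

import Mathlib

open MvPolynomial

noncomputable abbrev S : Type := MvPolynomial (Fin 3) ℂ

/-- The gradient `∇g = (g_x, g_y, g_z)` of a polynomial `g ∈ S = ℂ[x,y,z]`. -/
noncomputable def grad (g : S) : Fin 3 → S := fun t => pderiv t g

/-- The syzygy triple `ρ_j = Σ_{i≠j} (∏_{k≠i,j} f_k) (∇f_i × ∇f_j)`
of the 2-form `ω_j = df ∧ df_j/f_j`. -/
noncomputable def rho {m : ℕ} (F : Fin m → S) (j : Fin m) : Fin 3 → S :=
  ∑ i ∈ Finset.univ.erase j,
    (∏ k ∈ (Finset.univ.erase j).erase i, F k) • crossProduct (grad (F i)) (grad (F j))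

/-- The Jacobian syzygy module `D₀(f) = {(a,b,c) ∈ S³ : a f_x + b f_y + c f_z = 0}`. -/
noncomputable def D0 (f : S) : Submodule S (Fin 3 → S) where
  carrier := {v | ∑ t, v t * pderiv t f = 0}
  add_mem' {a b} ha hb := by
    simp only [Set.mem_setOf_eq, Pi.add_apply, add_mul, Finset.sum_add_distrib] at *
    rw [ha, hb, add_zero]
  zero_mem' := by simp
  smul_mem' c v hv := by
    simp only [Set.mem_setOf_eq, Pi.smul_apply, smul_eq_mul, mul_assoc, ← Finset.mul_sum] at *
    rw [hv, mul_zero]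

/-- The syzygy triple `σ^x = (0, f_z, −f_y)` of the 2-form `df ∧ dx`. -/
noncomputable def sigx (f : S) : Fin 3 → S := ![0, pderiv 2 f, -pderiv 1 f]
/-- The syzygy triple `σ^y = (−f_z, 0, f_x)` of the 2-form `df ∧ dy`. -/
noncomputable def sigy (f : S) : Fin 3 → S := ![-pderiv 2 f, 0, pderiv 0 f]
/-- The syzygy triple `σ^z = (f_y, −f_x, 0)` of the 2-form `df ∧ dz`. -/
noncomputable def sigz (f : S) : Fin 3 → S := ![pderiv 1 f, -pderiv 0 f, 0]

/-- The second-syzygy vectors `R_4, …, R_m ∈ S^{m−1}` (case `ℓ(C) = 3`, `f_1 = x`,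
`f_2 = y`, `f_3 = z`); the index `a : Fin (m−3)` corresponds to `R_{a+4}`. For
`4 ≤ j ≤ m−1`, `R_j` has `−x f_{j,x}` in position 1, `−y f_{j,y}` in position 2,
`−z f_{j,z}` in position 3, `f_j` in position `j` and zeros elsewhere; `R_m` has
`−f_m − x f_{m,x}`, `−f_m − y f_{m,y}`, `−f_m − z f_{m,z}` in positions 1, 2, 3 and
`−f_m` in positions 4,…,m−1. -/
noncomputable def Rvec3 {m : ℕ} (F : Fin m → S) (a : Fin (m - 3)) : Fin (m - 1) → S :=
  let j : Fin m := ⟨(a : ℕ) + 3, by have := a.isLt; omega⟩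
  fun k => (if (k : ℕ) = 0 then -(X 0 * pderiv 0 (F j)) else 0)
    + (if (k : ℕ) = 1 then -(X 1 * pderiv 1 (F j)) else 0)
    + (if (k : ℕ) = 2 then -(X 2 * pderiv 2 (F j)) else 0)
    + (if (k : ℕ) = (j : ℕ) then F j else 0)
    + (if (j : ℕ) = m - 1 then -F j else 0)

open scoped Matrix Function

/-! Put `L(D) = f · ∑ D_j df_j / f_j`, viewed as a triple in `S³`. Since `f_j ρ_j = ∇f × ∇f_j`,
we have `f · ∑ A_j ρ_j = ∇f × L(A)`. If this vanishes, expanding `v × (∇f × L(A))` with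
`v = (x, y, z)` and using Euler's formula `v · ∇f = d f` shows `L(A) = h ∇f = L(h, …, h)` for some
`h`, that is `L(A - h) = 0`.

Now `f` is squarefree, because smooth curves are reduced and transversal ones share no component, so
`L(D) = 0` forces `f_j ∣ D_j`: relations among the `df_j / f_j` are relations among the gradients
themselves, `D_j = B_j f_j` with `∑ B_j ∇f_j = 0`. Normalising `A_m = 0`, we get
`ker φ = {(B_j f_j - B_m f_m)_{j < m} : ∑ B_j ∇f_j = 0}`.

As `∇f_1, ∇f_2, ∇f_3` is the standard basis of `S³`, the coefficients `B_4, …, B_m` are free and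
determine the rest, which gives the generators `R_4, …, R_m`. If a combination of these vanishes,
all `B_j f_j` are equal, and Euler's formula applied to `∑ B_j ∇f_j = 0` makes them zero. -/

section SquarefreePolynomial

variable {σ K : Type*}

theorem pderiv_eq_zero_of_dvd [CommRing K] [IsDomain K] {p : MvPolynomial σ K} {t : σ}
    (h : p ∣ pderiv t p) : pderiv t p = 0 := by
  by_contra hne
  have hp : p ≠ 0 := by rintro rfl; simp at hne
  have hle : degreeOf t p ≤ degreeOf t (pderiv t p) := by
    obtain ⟨q, hq⟩ := h
    have hq0 : q ≠ 0 := by rintro rfl; simp [hq] at hne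
    rw [hq, degreeOf_mul_eq hp hq0]
    exact Nat.le_add_right _ _
  have hlt : degreeOf t (pderiv t p) < degreeOf t p := by
    have hdrop : ∀ s ∈ (pderiv t p).support, s t < degreeOf t p := by
      intro s hs
      have hs' : s + Finsupp.single t 1 ∈ p.support := by
        rw [mem_support_iff, coeff_pderiv] at hs
        exact mem_support_iff.2 (left_ne_zero_of_mul hs)
      simpa using monomial_le_degreeOf t hs'
    obtain ⟨s, hs⟩ := support_nonempty.2 hne
    exact (degreeOf_lt_iff (Nat.zero_lt_of_lt (hdrop s hs))).2 hdrop
  exact hle.not_gt hlt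

theorem eq_C_of_forall_pderiv_eq_zero [CommRing K] [NoZeroDivisors K] [CharZero K]
    {p : MvPolynomial σ K} (h : ∀ t, pderiv t p = 0) : p = C (coeff 0 p) := by
  classical
  ext s
  rw [coeff_C]
  split_ifs with hs
  · rw [hs]
  · obtain ⟨t, ht⟩ := Finsupp.ne_iff.1 (Ne.symm hs)
    have hst : s - Finsupp.single t 1 + Finsupp.single t 1 = s :=
      Finsupp.sub_add_single_one_cancel ht
    have hcoeff := coeff_pderiv p (s - Finsupp.single t 1) (i := t)
    rw [h t, coeff_zero, hst, eq_comm] at hcoeff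
    exact (mul_eq_zero.1 hcoeff).resolve_right (Nat.cast_add_one_ne_zero _)

variable [Field K]

theorem isUnit_of_forall_dvd_pderiv [CharZero K] {p : MvPolynomial σ K} (hp : p ≠ 0)
    (h : ∀ t, p ∣ pderiv t p) : IsUnit p := by
  have hC := eq_C_of_forall_pderiv_eq_zero fun t => pderiv_eq_zero_of_dvd (h t)
  rw [hC, Ne, C_eq_zero] at hp
  rw [hC]
  exact (IsUnit.mk0 _ hp).map C

-- Divide out `c = gcd f u`, so that `f = c a`: then `a ∣ c ∂a`, hence `a ∣ ∂a` and `a` is constant.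
theorem dvd_of_forall_dvd_mul_pderiv [CharZero K] {f u : MvPolynomial σ K} (hf : Squarefree f)
    (h : ∀ t, f ∣ u * pderiv t f) : f ∣ u := by
  obtain ⟨a, b, c, hab, rfl, rfl⟩ :=
    UniqueFactorizationMonoid.exists_reduced_factors f hf.ne_zero u
  have hca := squarefree_mul_iff.1 hf
  have ha : IsUnit a := isUnit_of_forall_dvd_pderiv hca.2.2.ne_zero fun t => by
    have h1 : a ∣ b * pderiv t (c * a) :=
      (mul_dvd_mul_iff_left hca.2.1.ne_zero).1 (by simpa only [mul_assoc] using h t)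
    have h2 : a ∣ c * pderiv t a := by
      have h3 := hab.dvd_of_dvd_mul_left h1
      rwa [pderiv_mul, dvd_add_right (dvd_mul_left _ _)] at h3
    exact hca.1.symm.dvd_of_dvd_mul_left h2
  exact mul_dvd_mul_left c ha.dvd

section Nullstellensatz

variable [IsAlgClosed K] [Finite σ] [Nontrivial σ]

theorem exists_ne_zero_eval_eq_zero {q : MvPolynomial σ K} (hq : ¬ IsUnit q) :
    ∃ p : σ → K, p ≠ 0 ∧ eval p q = 0 := by
  by_contra! hcon
  have hpow : ∀ t, ∃ n : ℕ, q ∣ X t ^ n := by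
    intro t
    have hX : X t ∈ vanishingIdeal K (zeroLocus K (Ideal.span {q})) := by
      rw [mem_vanishingIdeal_iff]
      intro p hp
      have hpq : eval p q = 0 := hp q (Ideal.mem_span_singleton_self q)
      have hp0 : p = 0 := not_imp_not.1 (hcon p) hpq
      simp [hp0]
    rw [vanishingIdeal_zeroLocus_eq_radical] at hX
    obtain ⟨n, hn⟩ := hX
    exact ⟨n, Ideal.mem_span_singleton.1 hn⟩
  obtain ⟨s, t, hst⟩ := exists_pair_ne σ
  have hrel : IsRelPrime (X s : MvPolynomial σ K) (X t) := by
    rw [X_prime.irreducible.isRelPrime_iff_not_dvd, X_dvd_X]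
    exact hst
  obtain ⟨n, hn⟩ := hpow s
  obtain ⟨k, hk⟩ := hpow t
  exact hq (hrel.pow hn hk)

theorem squarefree_of_forall_eval_pderiv_eq_zero {f : MvPolynomial σ K}
    (h : ∀ p : σ → K, (∀ t, eval p (pderiv t f) = 0) → p = 0) : Squarefree f := by
  rintro q ⟨r, rfl⟩
  by_contra hq
  obtain ⟨p, hp, hpq⟩ := exists_ne_zero_eval_eq_zero hq
  exact hp (h p fun t => by simp [hpq])

theorem isRelPrime_of_linearIndependent_eval_pderiv {f g : MvPolynomial σ K}
    (h : ∀ p : σ → K, p ≠ 0 → eval p f = 0 → eval p g = 0 →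
      LinearIndependent K ![fun t => eval p (pderiv t f), fun t => eval p (pderiv t g)]) :
    IsRelPrime f g := by
  rintro q ⟨a, rfl⟩ ⟨b, rfl⟩
  by_contra hq
  obtain ⟨p, hp, hpq⟩ := exists_ne_zero_eval_eq_zero hq
  have hgrad : ∀ c, (fun t => eval p (pderiv t (q * c))) =
      eval p c • fun t => eval p (pderiv t q) := by
    intro c
    ext t
    simp [hpq]
  have hli := h p hp (by simp [hpq]) (by simp [hpq])
  rw [hgrad, hgrad] at hli
  have hcomb := LinearIndependent.pair_iff.1 hli (eval p b) (-eval p a)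
    (by rw [neg_smul, smul_smul, smul_smul, mul_comm, add_neg_cancel])
  exact hli.ne_zero 0 (by simp [neg_eq_zero.1 hcomb.2])

end Nullstellensatz

end SquarefreePolynomial

theorem derivation_prod {R A M ι : Type*} [CommSemiring R] [CommSemiring A] [AddCommMonoid M]
    [Algebra R A] [Module A M] [Module R M] [DecidableEq ι] (D : Derivation R A M)
    (s : Finset ι) (f : ι → A) :
    D (∏ i ∈ s, f i) = ∑ i ∈ s, (∏ k ∈ s.erase i, f k) • D (f i) := by
  induction s using Finset.induction_on with
  | empty => simp
  | insert a s ha ih =>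
    rw [Finset.prod_insert ha, D.leibniz, ih, Finset.sum_insert ha, Finset.erase_insert ha,
      add_comm, Finset.smul_sum]
    congr 1
    refine Finset.sum_congr rfl fun i hi => ?_
    have hia : a ≠ i := by rintro rfl; exact ha hi
    rw [Finset.erase_insert_of_ne hia, Finset.prod_insert (by simp [ha]), mul_smul]

theorem dotProduct_X_grad {g : S} {d : ℕ} (hg : g.IsHomogeneous d) : X ⬝ᵥ grad g = d * g := by
  rw [← nsmul_eq_mul, ← hg.sum_X_mul_pderiv]
  rfl

theorem exists_eq_smul_grad_of_cross_eq_zero {f : S} {d : ℕ} {w : Fin 3 → S}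
    (hf : f.IsHomogeneous d) (hf0 : f ≠ 0) (hd : d ≠ 0) (hw : grad f ⨯₃ w = 0)
    (hdvd : f ∣ X ⬝ᵥ w) : ∃ h : S, w = h • grad f := by
  obtain ⟨g, hg⟩ := hdvd
  have hexpand := cross_cross_eq_smul_sub_smul' X (grad f) w
  rw [hw, map_zero, dotProduct_comm (grad f) X, dotProduct_X_grad hf, hg, eq_comm, sub_eq_zero,
    mul_comm (d : S) f, mul_smul, mul_smul] at hexpand
  have hgw : g • grad f = (d : S) • w := smul_right_injective _ hf0 hexpand
  have hinv : (C (d : ℂ)⁻¹ * (d : S) : S) = 1 := by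
    rw [← map_natCast C, ← C_mul, inv_mul_cancel₀ (Nat.cast_ne_zero.2 hd), C_1]
  exact ⟨C (d : ℂ)⁻¹ * g, by rw [mul_smul, hgw, smul_smul, hinv, one_smul]⟩

theorem eq_zero_of_sum_smul_grad_eq_zero_of_mul_eq {ι : Type*} [Fintype ι] {F : ι → S} {e : ι → ℕ}
    (hhom : ∀ j, (F j).IsHomogeneous (e j)) (hF0 : ∀ j, F j ≠ 0) (he : ∑ j, e j ≠ 0)
    {B : ι → S} {h : S} (hB : ∑ j, B j • grad (F j) = 0) (hBF : ∀ j, B j * F j = h) :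
    B = 0 := by
  have heuler : h * ((∑ j, e j : ℕ) : S) = 0 := by
    calc h * ((∑ j, e j : ℕ) : S) = X ⬝ᵥ ∑ j, B j • grad (F j) := by
          rw [dotProduct_sum, Nat.cast_sum, Finset.mul_sum]
          refine Finset.sum_congr rfl fun j _ => ?_
          rw [dotProduct_smul, dotProduct_X_grad (hhom j), ← hBF j, smul_eq_mul]
          ring
      _ = 0 := by rw [hB, dotProduct_zero]
  have hh : h = 0 := (mul_eq_zero.1 heuler).resolve_right (Nat.cast_ne_zero.2 he)
  exact funext fun j => (mul_eq_zero.1 ((hBF j).trans hh)).resolve_right (hF0 j)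

section LogForm

variable {ι : Type*} [Fintype ι] [DecidableEq ι] (F : ι → S)

/-- The coefficient vector of the 1-form `f · ∑ D_j df_j / f_j`, where `f = ∏ f_j`: the numerator
of the logarithmic 1-form with coefficients `D_j`, as a linear map in `D`. -/
noncomputable def logForm : (ι → S) →ₗ[S] Fin 3 → S :=
  Fintype.linearCombination S fun j => (∏ k ∈ Finset.univ.erase j, F k) • grad (F j)

theorem logForm_apply (D : ι → S) :
    logForm F D = ∑ j, D j • (∏ k ∈ Finset.univ.erase j, F k) • grad (F j) :=
  rfl

theorem logForm_const (h : S) : logForm F (fun _ => h) = h • grad (∏ j, F j) := by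
  ext t
  simp only [logForm_apply, grad, derivation_prod, Finset.sum_apply, Pi.smul_apply,
    Finset.smul_sum]

theorem logForm_mul_self (B : ι → S) :
    logForm F (B * F) = (∏ j, F j) • ∑ j, B j • grad (F j) := by
  rw [logForm_apply, Finset.smul_sum]
  refine Finset.sum_congr rfl fun j _ => ?_
  rw [← Finset.mul_prod_erase _ F (Finset.mem_univ j), smul_smul, smul_smul, Pi.mul_apply]
  congr 1
  ring

theorem dotProduct_X_logForm {e : ι → ℕ} (hhom : ∀ j, (F j).IsHomogeneous (e j)) (D : ι → S) :
    X ⬝ᵥ logForm F D = (∏ j, F j) * ∑ j, D j * e j := by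
  rw [logForm_apply, dotProduct_sum, Finset.mul_sum]
  refine Finset.sum_congr rfl fun j _ => ?_
  rw [dotProduct_smul, dotProduct_smul, dotProduct_X_grad (hhom j),
    ← Finset.mul_prod_erase _ F (Finset.mem_univ j), smul_eq_mul, smul_eq_mul]
  ring

variable {F}

theorem dvd_of_logForm_eq_zero (hsq : Squarefree (∏ j, F j)) {D : ι → S} (hD : logForm F D = 0)
    (j : ι) : F j ∣ D j := by
  have hFj : IsRelPrime (F j) (∏ k ∈ Finset.univ.erase j, F k) ∧ Squarefree (F j) := by
    rw [← Finset.mul_prod_erase _ F (Finset.mem_univ j), squarefree_mul_iff] at hsq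
    exact ⟨hsq.1, hsq.2.1⟩
  refine dvd_of_forall_dvd_mul_pderiv hFj.2 fun t => hFj.1.dvd_of_dvd_mul_left ?_
  have hsum := congrFun hD t
  rw [logForm_apply, Finset.sum_apply, ← Finset.add_sum_erase _ _ (Finset.mem_univ j)] at hsum
  have hdvd : F j ∣ (D j • (∏ k ∈ Finset.univ.erase j, F k) • grad (F j)) t := by
    rw [eq_neg_of_add_eq_zero_left hsum, dvd_neg]
    refine Finset.dvd_sum fun i hi => Dvd.dvd.mul_left (Dvd.dvd.mul_right ?_ _) _
    exact Finset.dvd_prod_of_mem F (by simpa using (Finset.ne_of_mem_erase hi).symm)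
  simpa only [Pi.smul_apply, smul_eq_mul, grad, mul_left_comm] using hdvd

theorem logForm_eq_zero_iff (hsq : Squarefree (∏ j, F j)) {D : ι → S} :
    logForm F D = 0 ↔ ∃ B : ι → S, ∑ j, B j • grad (F j) = 0 ∧ D = B * F := by
  constructor
  · intro hD
    choose B hB using dvd_of_logForm_eq_zero hsq hD
    have hDB : D = B * F := funext fun j => (hB j).trans (mul_comm _ _)
    rw [hDB, logForm_mul_self, smul_eq_zero_iff_right hsq.ne_zero] at hD
    exact ⟨B, hD, hDB⟩
  · rintro ⟨B, hB, rfl⟩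
    rw [logForm_mul_self, hB, smul_zero]

end LogForm

section Rho

variable {m : ℕ}

theorem smul_rho (F : Fin m → S) (j : Fin m) :
    F j • rho F j = grad (∏ k, F k) ⨯₃ grad (F j) := by
  have hgrad := logForm_const F 1
  rw [one_smul, logForm_apply] at hgrad
  rw [← hgrad, rho, Finset.smul_sum, map_sum, LinearMap.sum_apply,
    ← Finset.add_sum_erase _ _ (Finset.mem_univ j)]
  simp only [map_smul, LinearMap.smul_apply, cross_self, smul_zero, zero_add, one_smul]
  refine Finset.sum_congr rfl fun i hi => ?_
  rw [smul_smul, Finset.erase_right_comm, Finset.mul_prod_erase _ F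
    (by simpa using (Finset.ne_of_mem_erase hi).symm)]

theorem prod_smul_sum_smul_rho (F D : Fin m → S) :
    (∏ k, F k) • ∑ j, D j • rho F j = grad (∏ k, F k) ⨯₃ logForm F D := by
  rw [logForm_apply, map_sum, Finset.smul_sum]
  refine Finset.sum_congr rfl fun j _ => ?_
  rw [map_smul, map_smul, ← smul_rho, ← Finset.mul_prod_erase _ F (Finset.mem_univ j),
    smul_smul, smul_smul, smul_smul]
  congr 1
  ring

theorem sum_smul_rho_eq_zero_iff {F : Fin m → S} {e : Fin m → ℕ}
    (hhom : ∀ j, (F j).IsHomogeneous (e j)) (hF0 : ∏ j, F j ≠ 0) (he : ∑ j, e j ≠ 0)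
    {D : Fin m → S} :
    ∑ j, D j • rho F j = 0 ↔ ∃ h : S, logForm F (D - fun _ => h) = 0 := by
  have hcross : ∑ j, D j • rho F j = 0 ↔ grad (∏ j, F j) ⨯₃ logForm F D = 0 := by
    rw [← prod_smul_sum_smul_rho, smul_eq_zero_iff_right hF0]
  simp only [hcross, map_sub, logForm_const, sub_eq_zero]
  constructor
  · intro hzero
    refine exists_eq_smul_grad_of_cross_eq_zero (.prod _ _ _ fun j _ => hhom j) hF0 he hzero ?_
    exact ⟨_, dotProduct_X_logForm F hhom D⟩
  · rintro ⟨h, hh⟩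
    rw [hh, map_smul, cross_self, smul_zero]

theorem sum_smul_rho_castSucc_eq_zero_iff {F : Fin (m + 1) → S} {e : Fin (m + 1) → ℕ}
    (hhom : ∀ j, (F j).IsHomogeneous (e j)) (hsq : Squarefree (∏ j, F j)) (he : ∑ j, e j ≠ 0)
    {A : Fin m → S} :
    ∑ j, A j • rho F j.castSucc = 0 ↔ ∃ B : Fin (m + 1) → S, ∑ j, B j • grad (F j) = 0 ∧
      ∀ k, A k = B k.castSucc * F k.castSucc - B (Fin.last m) * F (Fin.last m) := by
  have hsnoc : ∑ j, A j • rho F j.castSucc =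
      ∑ j, Fin.snoc (α := fun _ => S) A 0 j • rho F j := by
    simp [Fin.sum_univ_castSucc]
  simp only [hsnoc, sum_smul_rho_eq_zero_iff hhom hsq.ne_zero he, logForm_eq_zero_iff hsq,
    _root_.funext_iff (α := Fin (m + 1)), Fin.forall_fin_succ', Pi.sub_apply, Pi.mul_apply,
    Fin.snoc_castSucc, Fin.snoc_last]
  constructor
  · rintro ⟨h, B, hB, hA, hlast⟩
    exact ⟨B, hB, fun k => by linear_combination hA k - hlast⟩
  · rintro ⟨B, hB, hA⟩
    exact ⟨-(B (Fin.last m) * F (Fin.last m)), B, hB, fun k => by rw [hA]; ring, by ring⟩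

end Rho

theorem sum_fin_add_three {M : Type*} [AddCommMonoid M] {n : ℕ} (g : Fin (n + 3) → M) :
    ∑ j, g j = ∑ t : Fin 3, g (t.castLE (Nat.le_add_left 3 n)) + ∑ a : Fin n, g (a.addNat 3) := by
  rw [Fin.sum_univ_succ, Fin.sum_univ_succ, Fin.sum_univ_succ, Fin.sum_univ_three,
    ← add_assoc, ← add_assoc]
  rfl

section ThreeLines

variable {n : ℕ} {F : Fin (n + 3) → S}

theorem sum_smul_grad_eq_zero_iff_of_eq_X
    (hF : ∀ t : Fin 3, F (t.castLE (Nat.le_add_left 3 n)) = X t) {B : Fin (n + 3) → S} :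
    ∑ j, B j • grad (F j) = 0 ↔ ∀ t : Fin 3, B (t.castLE (Nat.le_add_left 3 n)) =
      -∑ a : Fin n, B (a.addNat 3) * pderiv t (F (a.addNat 3)) := by
  rw [_root_.funext_iff]
  refine forall_congr' fun t => ?_
  have hcoord : ∑ s : Fin 3, B (s.castLE (Nat.le_add_left 3 n)) * pderiv t (X s : S) =
      B (t.castLE (Nat.le_add_left 3 n)) := by
    simp [pderiv_X, Pi.single_apply]
  simp only [Finset.sum_apply, Pi.smul_apply, grad, smul_eq_mul, Pi.zero_apply,
    sum_fin_add_three, hF, hcoord, eq_neg_iff_add_eq_zero]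

theorem exists_sum_smul_grad_eq_zero_of_eq_X
    (hF : ∀ t : Fin 3, F (t.castLE (Nat.le_add_left 3 n)) = X t) (b : Fin n → S) :
    ∃ B : Fin (n + 3) → S, ∑ j, B j • grad (F j) = 0 ∧ ∀ a, B (a.addNat 3) = b a := by
  let β (t : Fin 3) : S := -∑ a, b a * pderiv t (F (a.addNat 3))
  refine ⟨Fin.cons (β 0) (Fin.cons (β 1) (Fin.cons (β 2) b)), ?_, fun _ => rfl⟩
  rw [sum_smul_grad_eq_zero_iff_of_eq_X hF]
  intro t
  fin_cases t <;> rfl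

end ThreeLines

section Rvec3

variable {n : ℕ}

theorem Rvec3_castLE (F : Fin (n + 1 + 3) → S) (a : Fin (n + 1)) (t : Fin 3) :
    Rvec3 F a (t.castLE (Nat.le_add_left 3 n)) = -(X t * pderiv t (F (a.addNat 3))) -
      if a = Fin.last n then F (a.addNat 3) else 0 := by
  rcases a.eq_castSucc_or_eq_last with ⟨i, rfl⟩ | rfl
  · fin_cases t <;> simp [Rvec3, i.isLt.ne, Fin.addNat, Fin.castLE]
  · fin_cases t <;> simp [Rvec3, Fin.addNat, Fin.castLE, sub_eq_add_neg]

theorem Rvec3_addNat (F : Fin (n + 1 + 3) → S) (a : Fin (n + 1)) (c : Fin n) :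
    Rvec3 F a (c.addNat 3) = (if a = c.castSucc then F (a.addNat 3) else 0) -
      if a = Fin.last n then F (a.addNat 3) else 0 := by
  rcases a.eq_castSucc_or_eq_last with ⟨i, rfl⟩ | rfl
  · simp [Rvec3, i.isLt.ne, Fin.addNat, Fin.val_inj, eq_comm (a := c)]
  · simp [Rvec3, c.isLt.ne, c.castSucc_ne_last.symm, Fin.addNat]

theorem sum_smul_Rvec3_apply {F : Fin (n + 1 + 3) → S}
    (hF : ∀ t : Fin 3, F (t.castLE (Nat.le_add_left 3 (n + 1))) = X t) {B : Fin (n + 1 + 3) → S}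
    (hB : ∑ j, B j • grad (F j) = 0) {b : Fin (n + 1) → S} (hb : ∀ a, B (a.addNat 3) = b a)
    (k : Fin (n + 3)) :
    (∑ a : Fin (n + 1), b a • (Rvec3 F a : Fin (n + 3) → S)) k =
      B k.castSucc * F k.castSucc - B (Fin.last (n + 3)) * F (Fin.last (n + 3)) := by
  obtain rfl : (fun a => B (a.addNat 3)) = b := funext hb
  have hk : (∃ t : Fin 3, k = t.castLE (Nat.le_add_left 3 n)) ∨ ∃ c : Fin n, k = c.addNat 3 := by
    rcases lt_or_ge (k : ℕ) 3 with h | h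
    · exact Or.inl ⟨⟨k, h⟩, rfl⟩
    · exact Or.inr ⟨k.subNat 3 h, (Fin.addNat_subNat h).symm⟩
  have hlast : ∑ a : Fin (n + 1), B (a.addNat 3) * (if a = Fin.last n then F (a.addNat 3) else 0) =
      B (Fin.last (n + 3)) * F (Fin.last (n + 3)) := by
    simp
  rw [Finset.sum_apply]
  rcases hk with ⟨t, rfl⟩ | ⟨c, rfl⟩
  · have hBt := (sum_smul_grad_eq_zero_iff_of_eq_X hF).1 hB t
    have hsum : ∑ a : Fin (n + 1), B (a.addNat 3) * -(X t * pderiv t (F (a.addNat 3))) =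
        B (t.castLE (Nat.le_add_left 3 (n + 1))) * F (t.castLE (Nat.le_add_left 3 (n + 1))) := by
      rw [hBt, hF, ← Finset.sum_neg_distrib, Finset.sum_mul]
      exact Finset.sum_congr rfl fun a _ => by ring
    simp only [Pi.smul_apply, smul_eq_mul, Rvec3_castLE, mul_sub, Finset.sum_sub_distrib, hlast,
      hsum]
    rfl
  · simp only [Pi.smul_apply, smul_eq_mul, Rvec3_addNat, mul_sub, Finset.sum_sub_distrib, hlast]
    simp only [mul_ite, mul_zero, Finset.sum_ite_eq', Finset.mem_univ, if_true, sub_left_inj]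
    rfl

theorem mem_span_range_Rvec3_iff {F : Fin (n + 1 + 3) → S}
    (hF : ∀ t : Fin 3, F (t.castLE (Nat.le_add_left 3 (n + 1))) = X t) {A : Fin (n + 3) → S} :
    A ∈ Submodule.span S (Set.range (Rvec3 F)) ↔
      ∃ B : Fin (n + 3 + 1) → S, ∑ j, B j • grad (F j) = 0 ∧
        ∀ k, A k = B k.castSucc * F k.castSucc - B (Fin.last (n + 3)) * F (Fin.last (n + 3)) := by
  refine (Submodule.mem_span_range_iff_exists_fun S (v := (Rvec3 F : Fin (n + 1) → _))).trans ?_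
  constructor
  · rintro ⟨b, rfl⟩
    obtain ⟨B, hB, hb⟩ := exists_sum_smul_grad_eq_zero_of_eq_X hF b
    exact ⟨B, hB, sum_smul_Rvec3_apply hF hB hb⟩
  · rintro ⟨B, hB, hA⟩
    refine ⟨fun a => B (a.addNat 3), funext fun k => ?_⟩
    have hsum := sum_smul_Rvec3_apply hF hB (b := fun a => B (a.addNat 3)) (fun _ => rfl) k
    exact hsum.trans (hA k).symm

theorem linearIndependent_Rvec3 {F : Fin (n + 1 + 3) → S} {e : Fin (n + 1 + 3) → ℕ}
    (hF : ∀ t : Fin 3, F (t.castLE (Nat.le_add_left 3 (n + 1))) = X t)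
    (hhom : ∀ j, (F j).IsHomogeneous (e j)) (hF0 : ∀ j, F j ≠ 0) (he : ∑ j, e j ≠ 0) :
    LinearIndependent S (Rvec3 F) := by
  refine Fintype.linearIndependent_iff (v := (Rvec3 F : Fin (n + 1) → Fin (n + 3) → S)).2 ?_
  intro b hb
  obtain ⟨B, hB, hBb⟩ := exists_sum_smul_grad_eq_zero_of_eq_X hF b
  have hBF (j : Fin (n + 3 + 1)) : B j * F j = B (Fin.last (n + 3)) * F (Fin.last (n + 3)) := by
    induction j using Fin.lastCases with
    | last => rfl
    | cast k => exact sub_eq_zero.1 ((sum_smul_Rvec3_apply hF hB hBb k).symm.trans (congrFun hb k))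
  have hB0 := eq_zero_of_sum_smul_grad_eq_zero_of_mul_eq hhom hF0 he hB hBF
  exact fun a => (hBb a).symm.trans (congrFun hB0 (a.addNat 3))

end Rvec3

theorem kernel_caseL3_general
    (m : ℕ) (hm : 4 ≤ m) (F : Fin m → S) (e : Fin m → ℕ)
    (hhom : ∀ j, (F j).IsHomogeneous (e j)) (hsq : Squarefree (∏ j, F j))
    (hF : ∀ t : Fin 3, F (t.castLE (Nat.le_of_succ_le hm)) = X t) :
    {A : Fin (m - 1) → S |
        ∑ j : Fin (m - 1), A j • rho F (Fin.castLE (Nat.sub_le m 1) j) = 0}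
      = (Submodule.span S (Set.range (Rvec3 F)) : Set (Fin (m - 1) → S)) ∧
    LinearIndependent S (Rvec3 F) := by
  obtain ⟨n, rfl⟩ : ∃ n, m = n + 1 + 3 := ⟨m - 4, by omega⟩
  have hF0 (j) : F j ≠ 0 := Finset.prod_ne_zero_iff.1 hsq.ne_zero j (Finset.mem_univ j)
  have he : ∑ j, e j ≠ 0 := by
    have he1 : e 0 = 1 := (hhom 0).inj_right (hF 0 ▸ isHomogeneous_X ℂ 0) (hF0 0)
    exact fun h => by simp [Finset.sum_eq_zero_iff.1 h 0 (Finset.mem_univ 0)] at he1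
  refine ⟨Set.ext fun A => ?_, linearIndependent_Rvec3 hF hhom hF0 he⟩
  exact (sum_smul_rho_castSucc_eq_zero_iff hhom hsq he).trans (mem_span_range_Rvec3_iff hF).symm

/-- if `ℓ(C) = 3` with `f_1 = x`, `f_2 = y`, `f_3 = z`, the kernel of
`φ : S^{m−1} → S³`, `φ(A_1,…,A_{m−1}) = Σ A_j ρ_j`,
is the free `S`-module with basis `R_4, …, R_m`. -/
theorem kernel_caseL3
    (m : ℕ) (hm : 4 ≤ m) (F : Fin m → S) (e : Fin m → ℕ)
    (he : ∀ j, 1 ≤ e j)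
    (hhom : ∀ j, (F j).IsHomogeneous (e j))
    (hsmooth : ∀ j, ∀ p : Fin 3 → ℂ,
      (∀ t, eval p (pderiv t (F j)) = 0) → p = 0)
    (hnc : ∀ i j : Fin m, i ≠ j → ∀ p : Fin 3 → ℂ, p ≠ 0 →
      eval p (F i) = 0 → eval p (F j) = 0 →
      LinearIndependent ℂ
        ![fun t => eval p (pderiv t (F i)), fun t => eval p (pderiv t (F j))])
    (htriple : ∀ i j k : Fin m, i ≠ j → i ≠ k → j ≠ k → ∀ p : Fin 3 → ℂ, p ≠ 0 →
      ¬(eval p (F i) = 0 ∧ eval p (F j) = 0 ∧ eval p (F k) = 0))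
    (hF1 : F ⟨0, by omega⟩ = X 0) (hF2 : F ⟨1, by omega⟩ = X 1) (hF3 : F ⟨2, by omega⟩ = X 2)
    (he1 : e ⟨0, by omega⟩ = 1) (he2 : e ⟨1, by omega⟩ = 1) (he3 : e ⟨2, by omega⟩ = 1)
    (hl3 : ∀ j : Fin m, 3 ≤ (j : ℕ) → 2 ≤ e j) :
    {A : Fin (m - 1) → S |
        ∑ j : Fin (m - 1), A j • rho F (Fin.castLE (Nat.sub_le m 1) j) = 0}
      = (Submodule.span S (Set.range (Rvec3 F)) : Set (Fin (m - 1) → S)) ∧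
    LinearIndependent S (Rvec3 F) := by
  have hF (t : Fin 3) : F (t.castLE (Nat.le_of_succ_le hm)) = X t := by
    fin_cases t
    exacts [hF1, hF2, hF3]
  refine kernel_caseL3_general m hm F e hhom ?_ hF
  refine Finset.squarefree_prod_of_pairwise_isCoprime (fun i _ j _ hij => ?_) fun j _ => ?_
  · exact isRelPrime_of_linearIndependent_eval_pderiv (hnc i j hij)
  · exact squarefree_of_forall_eval_pderiv_eq_zero (hsmooth j)
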